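/- Let N ∈ ℕ ∪ {∞}, w > 0 and U : ℕ → ℝ be such that β = Σ_{m=0}^{N} e^{U(m)}·w^m/m! < ∞, and let γ be the discrete Gibbs measure with these parameters. Assume Σ_{m=0}^{N} m·γ(m) < ∞. Then for every bounded function g : ℕ → ℝ satisfying g(m) = 0 for all m > N (a condition only relevant when N is finite), Σ_{m=0}^{N} [ w·e^{U(m+1)−U(m)}·g(m+1) − m·g(m) ]·γ(m) = 0; equivalently, if X is a random variable with law γ, then E[ w·e^{U(X+1)−U(X)}·g(X+1) − X·g(X) ] = 0. -/

import Mathlib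

open MeasureTheory Finset

/-!
Put `a m = m g(m) γ(m)`. The Gibbs weights satisfy the detailed-balance relation
`w e^{U(m+1) - U(m)} γ(m) = (m + 1) γ(m + 1)` as long as `m + 1 ≤ N`, and beyond that `g(m + 1) = 0`.
Hence the `m`-th summand is `a (m + 1) - a m`. Since `g` is bounded and `γ` has a finite mean,
`a` is summable, so the series telescopes to `-a 0 = 0`.
-/

/-- Stein identity for a discrete Gibbs measure with parameters `N ∈ ℕ ∪ {∞}`,
`w > 0` and `U : ℕ → ℝ`: for every bounded `g` vanishing beyond `N`,
`Σ_{m=0}^{N} [w·e^{U(m+1)−U(m)}·g(m+1) − m·g(m)]·γ(m) = 0`. -/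
theorem dgm_stein_identity
    (N : ℕ∞) (w : ℝ) (hw : 0 < w) (U : ℕ → ℝ)
    (hsum : Summable (fun m : ℕ =>
      if (m : ℕ∞) ≤ N then Real.exp (U m) * w ^ m / m.factorial else 0))
    (β : ℝ)
    (hβ : β = ∑' m : ℕ, if (m : ℕ∞) ≤ N then Real.exp (U m) * w ^ m / m.factorial else 0)
    (γ : ℕ → ℝ)
    (hγ : ∀ m : ℕ, γ m =
      if (m : ℕ∞) ≤ N then Real.exp (U m) * w ^ m / (β * m.factorial) else 0)
    (hmean : Summable (fun m : ℕ => (m : ℝ) * γ m)) :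
    ∀ g : ℕ → ℝ, (∃ C, ∀ m, |g m| ≤ C) → (∀ m : ℕ, N < (m : ℕ∞) → g m = 0) →
      ∑' m : ℕ, (w * Real.exp (U (m + 1) - U m) * g (m + 1) - (m : ℝ) * g m) * γ m = 0 := by
  rintro g ⟨C, hC⟩ hg
  have ha : Summable (fun m : ℕ => (m : ℝ) * g m * γ m) := by
    refine Summable.of_norm_bounded (hmean.abs.mul_left C) fun m => ?_
    have h := mul_le_mul_of_nonneg_right (hC m) (abs_nonneg ((m : ℝ) * γ m))
    calc ‖(m : ℝ) * g m * γ m‖ = |g m| * |(m : ℝ) * γ m| := by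
          rw [Real.norm_eq_abs, ← abs_mul]; ring_nf
      _ ≤ _ := h
  have hterm : ∀ m : ℕ, (w * Real.exp (U (m + 1) - U m) * g (m + 1) - (m : ℝ) * g m) * γ m
      = ((m + 1 : ℕ) : ℝ) * g (m + 1) * γ (m + 1) - (m : ℝ) * g m * γ m := by
    intro m
    rw [sub_mul]
    congr 1
    by_cases h : ((m + 1 : ℕ) : ℕ∞) ≤ N
    · have h' : (m : ℕ∞) ≤ N := le_trans (by exact_mod_cast Nat.le_succ m) h
      rw [hγ, hγ, if_pos h, if_pos h', Real.exp_sub, Nat.factorial_succ, pow_succ]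
      have h1 : ((m : ℝ) + 1) ≠ 0 := by positivity
      have h2 : (m.factorial : ℝ) ≠ 0 := by positivity
      push_cast
      field_simp
    · rw [hg (m + 1) (not_le.mp h)]
      simp
  have hshift := (summable_nat_add_iff 1).2 ha
  rw [tsum_congr hterm, hshift.tsum_sub ha, ha.tsum_eq_zero_add]
  simp
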